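/- For every integer k ≥ 4, the number of 𝓢_k-free orientations of the complete graph K_{k+1} satisfies S_k(K_{k+1}) < 2^{t_{k-1}(k+1)}. -/

import Mathlib

open scoped Classical

noncomputable section

universe u

variable {V : Type u}

/-- An orientation of a simple graph `G`: a relation choosing exactly one
direction for each edge of `G`. -/
abbrev SimpleGraph.Orient (G : SimpleGraph V) : Type u :=
  {D : V → V → Prop // (∀ u v, D u v → G.Adj u v) ∧ ∀ u v, G.Adj u v → (D u v ↔ ¬ D v u)}

/-- A family of tournaments: for each `k`, a set of orientations of the
complete graph on `k` vertices. -/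
abbrev TournFamily : Type :=
  ∀ k : ℕ, Set ((⊤ : SimpleGraph (Fin k)).Orient)

/-- The orientation `D` of `G` contains a copy of the `k`-vertex tournament `T`. -/
def ContainsCopy {G : SimpleGraph V} (D : G.Orient) {k : ℕ}
    (T : (⊤ : SimpleGraph (Fin k)).Orient) : Prop :=
  ∃ φ : Fin k → V, Function.Injective φ ∧ ∀ i j, T.1 i j → D.1 (φ i) (φ j)

/-- The orientation `D` is `F`-free: it contains no copy of a member of `F`. -/
def FreeOrient {G : SimpleGraph V} (F : TournFamily) (D : G.Orient) : Prop :=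
  ∀ (k : ℕ) (T : (⊤ : SimpleGraph (Fin k)).Orient), T ∈ F k → ¬ ContainsCopy D T

/-- `D(G, F)`: the number of `F`-free orientations of the graph `G`. -/
def numOrient (G : SimpleGraph V) (F : TournFamily) : ℕ :=
  Nat.card {D : G.Orient // FreeOrient F D}

/-- `D(n, F)`: the maximum of `D(G, F)` over all `n`-vertex graphs `G`. -/
def maxOrient (n : ℕ) (F : TournFamily) : ℕ :=
  sSup (Set.range fun G : SimpleGraph (Fin n) => numOrient G F)

/-- A tournament is strongly connected if there is a directed path between
every ordered pair of vertices. -/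
def IsStrongTourn {k : ℕ} (T : (⊤ : SimpleGraph (Fin k)).Orient) : Prop :=
  ∀ u v : Fin k, Relation.ReflTransGen T.1 u v

/-- `𝓢 k`: the family of strongly connected tournaments on `k` vertices. -/
def SFam (k : ℕ) : TournFamily := fun m => {T | m = k ∧ IsStrongTourn T}

/-- `t r n`: the number of edges of the `r`-partite Turán graph on `n` vertices. -/
def turanNum (r n : ℕ) : ℕ := (SimpleGraph.turanGraph n r).edgeFinset.card

/-! A strongly connected tournament on at least four vertices stays strongly connected after the
deletion of a suitable vertex. So an `𝓢_k`-free tournament on `k + 1` vertices is not strongly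
connected: all edges between some set `A` and its complement point into `A`. Since the deletion of a
source or of a sink does not leave a strongly connected tournament either, `A` can be chosen with at
least two vertices on both sides unless there are both a source and a sink. Each of these
configurations fixes many edges, and since `t_{k-1}(k+1) = (k + 1).choose 2 - 2`, a union bound over
them suffices for `k ≥ 5`. For `k = 4` it does not; but a cut into sets of sizes `2` and `3` yields
a source and a sink unless the larger side is a cyclic triangle, and counting with this extra
restriction gives at most `160 + 80 < 2 ^ 8` orientations. -/

open Finset

section Strong

variable {D : V → V → Prop} {S : Finset V}

/-- Strong connectivity of the subdigraph of `D` induced on `S`, in cut form: every nonempty proper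
subset of `S` is left by an edge staying inside `S`. -/
def StrongOn (D : V → V → Prop) (S : Finset V) : Prop :=
  ∀ A ⊂ S, A.Nonempty → ∃ a ∈ A, ∃ b ∈ S \ A, D a b

theorem strongOn_singleton (D : V → V → Prop) (v : V) : StrongOn D {v} := fun _ hA hne =>
  absurd (ssubset_singleton_iff.1 hA) hne.ne_empty

theorem StrongOn.reflTransGen (hS : StrongOn D S) (u v : S) :
    Relation.ReflTransGen (fun x y : S => D x y) u v := by
  by_contra huv
  let R : Finset V := {x ∈ S | ∃ h : x ∈ S, Relation.ReflTransGen (fun x y : S => D x y) u ⟨x, h⟩}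
  have hvR : (v : V) ∉ R := fun h => huv (mem_filter.1 h).2.2
  have hRS : R ⊂ S := (filter_subset _ _).ssubset_of_ne fun h => hvR (h.ge v.2)
  obtain ⟨a, ha, b, hb, hab⟩ := hS R hRS ⟨u, mem_filter.2 ⟨u.2, u.2, .refl⟩⟩
  obtain ⟨hbS, hbR⟩ := mem_sdiff.1 hb
  obtain ⟨-, haS, hua⟩ := mem_filter.1 ha
  exact hbR (mem_filter.2 ⟨hbS, hbS, hua.tail hab⟩)

theorem strongOn_insert (hS : StrongOn D S) {v s s' : V} (hs : s ∈ S) (hvs : D v s)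
    (hs' : s' ∈ S) (hsv : D s' v) : StrongOn D (insert v S) := by
  intro A hA hne
  obtain hdisj | hmeet := (A ∩ S).eq_empty_or_nonempty
  · obtain ⟨a, ha⟩ := hne
    have hnot : ∀ x ∈ S, x ∉ A := fun x hxS hxA =>
      notMem_empty x (hdisj ▸ mem_inter.2 ⟨hxA, hxS⟩)
    have hav : a = v := (mem_insert.1 (hA.1 ha)).resolve_right fun h => hnot a h ha
    exact ⟨v, hav ▸ ha, s, by simp [hs, hnot s hs], hvs⟩
  obtain hSA | hSA := eq_or_ne (A ∩ S) S
  · rw [inter_eq_right] at hSA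
    have hvA : v ∉ A := fun hv => hA.2 (insert_subset hv hSA)
    exact ⟨s', hSA hs', v, by simp [hvA], hsv⟩
  · obtain ⟨a, ha, b, hb, hab⟩ := hS _ (inter_subset_right.ssubset_of_ne hSA) hmeet
    simp only [mem_inter, mem_sdiff, not_and] at ha hb
    exact ⟨a, ha.1, b, by simp [hb.1, mt hb.2 (not_not.2 hb.1)], hab⟩

theorem StrongOn.forall_not_rel_or_forall_not_rel (hS : StrongOn D S) {v : V}
    (hv : ¬ StrongOn D (insert v S)) : (∀ s ∈ S, ¬ D v s) ∨ ∀ s ∈ S, ¬ D s v := by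
  by_contra! h
  obtain ⟨⟨s, hs, hvs⟩, s', hs', hsv⟩ := h
  exact hv (strongOn_insert hS hs hvs hs' hsv)

theorem strongOn_insert_insert (hS : S.Nonempty) {i o : V} (ho : ∀ s ∈ S, D o s)
    (hi : ∀ s ∈ S, D s i) (hio : D i o) : StrongOn D (insert i (insert o S)) := by
  intro A hA hne
  by_cases hoA : o ∈ A
  · by_cases hSA : S ⊆ A
    · obtain ⟨s, hs⟩ := hS
      have hiA : i ∉ A := fun h => hA.2 (insert_subset h (insert_subset hoA hSA))
      exact ⟨s, hSA hs, i, by simp [hiA], hi s hs⟩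
    · obtain ⟨s, hs, hsA⟩ := not_subset.1 hSA
      exact ⟨o, hoA, s, by simp [hs, hsA], ho s hs⟩
  by_cases hiA : i ∈ A
  · exact ⟨i, hiA, o, by simp [hoA], hio⟩
  · obtain ⟨a, ha⟩ := hne
    have haS : a ∈ S := by
      have := hA.1 ha
      grind
    exact ⟨a, ha, i, by simp [hiA], hi a haS⟩

theorem StrongOn.exists_rel_of_mem (hS : StrongOn D S) {a : V} (ha : a ∈ S) (hcard : 1 < #S) :
    ∃ b ∈ S, b ≠ a ∧ D a b := by
  have hss : {a} ⊂ S := ⟨singleton_subset_iff.2 ha, fun h => by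
    simpa using hcard.trans_le (card_le_card h)⟩
  obtain ⟨_, hx, b, hb, hab⟩ := hS _ hss (singleton_nonempty a)
  rw [mem_sdiff, mem_singleton] at hb
  exact ⟨b, hb.1, hb.2, mem_singleton.1 hx ▸ hab⟩

theorem StrongOn.cycle_or_cycle [Std.Asymm D] {a b c : V} (hT : StrongOn D {a, b, c})
    (hab : a ≠ b) (hac : a ≠ c) (hbc : b ≠ c) :
    (D a b ∧ D b c ∧ D c a) ∨ (D b a ∧ D c b ∧ D a c) := by
  have hcard : 1 < #{a, b, c} := by
    rw [card_eq_three.2 ⟨a, b, c, hab, hac, hbc, rfl⟩]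
    norm_num
  have hout := fun {x} (hx : x ∈ ({a, b, c} : Finset V)) => hT.exists_rel_of_mem hx hcard
  have ha := hout (x := a) (by simp)
  have hb := hout (x := b) (by simp)
  have hc := hout (x := c) (by simp)
  have := fun x y => asymm_of D (a := x) (b := y)
  simp only [mem_insert, mem_singleton] at ha hb hc
  grind

theorem rel_of_ne_of_not_rel [Std.Trichotomous D] {a b : V} (hab : a ≠ b) (h : ¬ D a b) : D b a :=
  ((trichotomous_of D a b).resolve_left h).resolve_left hab

theorem StrongOn.exists_rel_of_forall_not_rel [Fintype V] [Std.Trichotomous D]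
    (hD : StrongOn D univ) (hne : S.Nonempty) (hS : S ≠ univ)
    (hout : ∀ v ∉ S, (∀ s ∈ S, ¬ D v s) ∨ ∀ s ∈ S, ¬ D s v) :
    ∃ i ∉ S, ∃ o ∉ S, (∀ s ∈ S, D s i) ∧ (∀ s ∈ S, D o s) ∧ D i o := by
  obtain ⟨a, ha, b, hb, hab⟩ := hD S (ssubset_univ_iff.2 hS) hne
  let I : Finset V := {i | i ∉ S ∧ ∀ s ∈ S, ¬ D i s}
  have hbI : b ∈ I := by
    have hbS := (mem_sdiff.1 hb).2
    simpa [I, hbS] using (hout b hbS).resolve_right fun h => h a ha hab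
  have hI : I ≠ univ := fun h => by
    have := h ▸ mem_univ a
    simp [I, ha] at this
  obtain ⟨i, hi, o, ho, hio⟩ := hD I (ssubset_univ_iff.2 hI) ⟨b, hbI⟩
  simp only [I, mem_filter, mem_sdiff, mem_univ, true_and, not_and] at hi ho
  have hoS : o ∉ S := fun h => hi.2 o h hio
  exact ⟨i, hi.1, o, hoS,
    fun s hs => rel_of_ne_of_not_rel (ne_of_mem_of_not_mem hs hi.1).symm (hi.2 s hs),
    fun s hs => rel_of_ne_of_not_rel (ne_of_mem_of_not_mem hs hoS)
      ((hout o hoS).resolve_left (ho hoS) s hs), hio⟩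

theorem exists_strongOn_compl_singleton_of_insert_insert [Fintype V] {i o : V} (hiS : i ∉ S)
    (hoS : o ∉ S) (hi : ∀ s ∈ S, D s i) (ho : ∀ s ∈ S, D o s) (hio : D i o) (hcard : 1 < #S)
    (hcover : insert i (insert o S) = univ) : ∃ v, StrongOn D {v}ᶜ := by
  obtain ⟨s, hs, t, ht, hst⟩ := one_lt_card.1 hcard
  have hdelete : {s}ᶜ = insert i (insert o (S.erase s)) := by
    rw [compl_singleton, ← hcover, erase_insert_of_ne (ne_of_mem_of_not_mem hs hiS).symm,
      erase_insert_of_ne (ne_of_mem_of_not_mem hs hoS).symm]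
  exact ⟨s, hdelete ▸ strongOn_insert_insert ⟨t, mem_erase.2 ⟨hst.symm, ht⟩⟩
    (fun x hx => ho x (mem_of_mem_erase hx)) (fun x hx => hi x (mem_of_mem_erase hx)) hio⟩

-- Take a maximal proper strong `S`; if it misses two vertices, then some edge `i ⟶ o` outside `S`
-- has `S ⟶ i` and `o ⟶ S`, so maximality gives `V = S ∪ {i, o}`, and any `v ∈ S` can be deleted.
theorem StrongOn.exists_compl_singleton [Fintype V] [Std.Trichotomous D]
    (hV : 4 ≤ Fintype.card V) (hD : StrongOn D univ) : ∃ v, StrongOn D {v}ᶜ := by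
  obtain ⟨x⟩ : Nonempty V := Fintype.card_pos_iff.1 (by lia)
  have hx : ({x} : Finset V) ≠ univ := fun h => by
    have := congrArg card h
    rw [card_singleton, card_univ] at this
    lia
  obtain ⟨S, hxS, ⟨hS, hSuniv⟩, hmax⟩ := Finite.exists_le_maximal
    (p := fun S => StrongOn D S ∧ S ≠ univ) ⟨strongOn_singleton D x, hx⟩
  have huniv : ∀ T, StrongOn D T → S ⊂ T → T = univ := fun T hT hST => by
    by_contra hne
    exact hST.2 (hmax ⟨hT, hne⟩ hST.1)
  by_cases hins : ∃ v ∉ S, StrongOn D (insert v S)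
  · obtain ⟨v, hv, h⟩ := hins
    have hSv : {v}ᶜ = S := by
      rw [compl_singleton, ← huniv _ h (ssubset_insert hv), erase_insert hv]
    exact ⟨v, hSv ▸ hS⟩
  push Not at hins
  have hSne : S.Nonempty := ⟨x, by simpa using hxS⟩
  obtain ⟨i, hiS, o, hoS, hi, ho, hio⟩ := hD.exists_rel_of_forall_not_rel hSne hSuniv
    fun v hv => hS.forall_not_rel_or_forall_not_rel (hins v hv)
  have hcover : insert i (insert o S) = univ :=
    huniv _ (strongOn_insert_insert hSne ho hi hio)
      ⟨(subset_insert o S).trans (subset_insert i _), fun h => hiS (h (mem_insert_self _ _))⟩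
  have hcard : 1 < #S := by
    have := (card_insert_le i (insert o S)).trans (Nat.succ_le_succ (card_insert_le o S))
    rw [hcover, card_univ] at this
    lia
  exact exists_strongOn_compl_singleton_of_insert_insert hiS hoS hi ho hio hcard hcover

end Strong

section Dominated

variable {D : V → V → Prop} {S A : Finset V}

/-- Every edge between `A` and its complement points into `A`. Thus `{v}` is dominated when `v` is a
sink, and `{u}ᶜ` is dominated when `u` is a source. -/
def IsDominated (D : V → V → Prop) (A : Finset V) : Prop :=
  ∀ ⦃b⦄, b ∉ A → ∀ ⦃a⦄, a ∈ A → D b a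

/-- `D` has a source and a sink. -/
def HasSourceAndSink [Fintype V] (D : V → V → Prop) : Prop :=
  ∃ u v, IsDominated D {u}ᶜ ∧ IsDominated D {v}

theorem IsDominated.ne_of_source_of_sink [Fintype V] [Nontrivial V] [Std.Asymm D] {u v : V}
    (hu : IsDominated D {u}ᶜ) (hv : IsDominated D {v}) : u ≠ v := by
  rintro rfl
  obtain ⟨x, hx⟩ := exists_ne u
  exact asymm_of D (hu (b := u) (by simp) (a := x) (by simpa)) (hv (by simpa) (by simp))

variable [Std.Trichotomous D]

theorem exists_ssubset_of_not_strongOn (hS : ¬ StrongOn D S) :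
    ∃ A ⊂ S, A.Nonempty ∧ ∀ b ∈ S \ A, ∀ a ∈ A, D b a := by
  simp only [StrongOn] at hS
  push Not at hS
  obtain ⟨A, hAS, hne, hA⟩ := hS
  exact ⟨A, hAS, hne, fun b hb a ha =>
    rel_of_ne_of_not_rel (ne_of_mem_of_not_mem ha (mem_sdiff.1 hb).2) (hA a ha b hb)⟩

theorem IsDominated.exists_ssubset (hS : IsDominated D S) (hnot : ¬ StrongOn D S) :
    ∃ A ⊂ S, A.Nonempty ∧ IsDominated D A := by
  obtain ⟨A, hAS, hne, hA⟩ := exists_ssubset_of_not_strongOn hnot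
  refine ⟨A, hAS, hne, fun b hb a ha => ?_⟩
  by_cases hbS : b ∈ S
  · exact hA b (mem_sdiff.2 ⟨hbS, hb⟩) a ha
  · exact hS hbS (hAS.1 ha)

theorem IsDominated.exists_ssuperset [Fintype V] (hS : IsDominated D S)
    (hnot : ¬ StrongOn D Sᶜ) : ∃ A, S ⊂ A ∧ A ≠ univ ∧ IsDominated D A := by
  obtain ⟨A, hAS, ⟨x, hx⟩, hA⟩ := exists_ssubset_of_not_strongOn hnot
  obtain ⟨y, hyS, hyA⟩ := exists_of_ssubset hAS
  have hxS := mem_compl.1 (hAS.1 hx)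
  have hyS := mem_compl.1 hyS
  refine ⟨S ∪ A, ⟨subset_union_left, fun h => hxS (h (mem_union_right _ hx))⟩,
    fun h => by simpa [hyS, hyA] using eq_univ_iff_forall.1 h y, fun b hb a ha => ?_⟩
  rw [mem_union, not_or] at hb
  rcases mem_union.1 ha with ha | ha
  · exact hS hb.1 ha
  · exact hA b (by simp [hb]) a ha

theorem IsDominated.exists_sink (hA : IsDominated D A) (hne : A.Nonempty) (hcard : #A ≤ 2) :
    ∃ v, IsDominated D {v} := by
  have := hne.card_pos
  obtain h1 | h2 : #A = 1 ∨ #A = 2 := by lia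
  · obtain ⟨v, rfl⟩ := card_eq_one.1 h1
    exact ⟨v, hA⟩
  obtain ⟨a, b, hab, rfl⟩ := card_eq_two.1 h2
  simp only [IsDominated, mem_singleton, forall_eq] at hA ⊢
  by_cases h : D a b
  · exact ⟨b, fun x hx => by grind⟩
  · have := rel_of_ne_of_not_rel hab h
    exact ⟨a, fun x hx => by grind⟩

theorem IsDominated.exists_source [Fintype V] (hA : IsDominated D A) (hne : A ≠ univ)
    (hcard : #Aᶜ ≤ 2) : ∃ u, IsDominated D {u}ᶜ := by
  have hpos : 0 < #Aᶜ := card_pos.2 (nonempty_iff_ne_empty.2 (mt (compl_eq_empty_iff A).1 hne))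
  obtain h1 | h2 : #Aᶜ = 1 ∨ #Aᶜ = 2 := by lia
  · obtain ⟨u, hu⟩ := card_eq_one.1 h1
    exact ⟨u, by rwa [← hu, compl_compl]⟩
  obtain ⟨a, b, hab, h⟩ := card_eq_two.1 h2
  obtain rfl := compl_eq_comm.1 h
  simp only [IsDominated, mem_compl, mem_singleton, not_not, forall_eq] at hA ⊢
  by_cases h : D a b
  · exact ⟨a, fun x hx => by grind⟩
  · have := rel_of_ne_of_not_rel hab h
    exact ⟨b, fun x hx => by grind⟩

theorem hasSourceAndSink_or_exists_isDominated [Fintype V] {k : ℕ} (hk : 3 ≤ k)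
    (hV : Fintype.card V = k + 1) (hD : ∀ S : Finset V, #S = k → ¬ StrongOn D S) :
    HasSourceAndSink D ∨ ∃ A, #A ∈ Icc 2 (k - 1) ∧ IsDominated D A := by
  have hcompl (v : V) : #({v}ᶜ : Finset V) = k := by
    rw [card_compl, hV, card_singleton, Nat.add_sub_cancel]
  have huniv : ¬ StrongOn D univ := fun h =>
    have ⟨v, hv⟩ := h.exists_compl_singleton (by lia)
    hD _ (hcompl v) hv
  obtain ⟨A, hAuniv, hAne, hA⟩ := IsDominated.exists_ssubset
    (fun b hb => absurd (mem_univ b) hb) huniv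
  by_contra! ⟨hno, hmid⟩
  have hext {B : Finset V} (hB : IsDominated D B) (hne : B.Nonempty) (huniv : B ≠ univ) :
      #B = 1 ∨ #Bᶜ = 1 := by
    have := hne.card_pos
    have := card_lt_card (ssubset_univ_iff.2 huniv)
    rw [card_univ, hV] at this
    have := mt (hmid B) (not_not.2 hB)
    rw [mem_Icc] at this
    rw [card_compl, hV]
    lia
  obtain hA1 | hA1 := hext hA hAne hAuniv.ne
  · obtain ⟨v, rfl⟩ := card_eq_one.1 hA1
    obtain ⟨B, hvB, hBuniv, hB⟩ := hA.exists_ssuperset (hD _ (hcompl v))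
    have := card_lt_card hvB
    obtain ⟨u, hu⟩ := card_eq_one.1 <|
      (hext hB (hAne.mono hvB.1) hBuniv).resolve_left (by lia)
    exact hno ⟨u, v, by rwa [← hu, compl_compl], hA⟩
  · obtain ⟨u, hu⟩ := card_eq_one.1 hA1
    obtain rfl : A = {u}ᶜ := by rw [← hu, compl_compl]
    obtain ⟨B, hBA, hBne, hB⟩ := hA.exists_ssubset (hD _ (hcompl u))
    have := card_lt_card (compl_ssubset_compl.2 hBA)
    obtain ⟨v, rfl⟩ := card_eq_one.1 <|
      (hext hB hBne (hBA.trans_subset (subset_univ _)).ne).resolve_right (by lia)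
    exact hno ⟨u, v, hA, hB⟩

theorem hasSourceAndSink_or_exists_strongOn_card_three [Fintype V] (hV : Fintype.card V = 5)
    (hD : ∀ S : Finset V, #S = 4 → ¬ StrongOn D S) :
    HasSourceAndSink D ∨
      ∃ T, #T = 3 ∧ StrongOn D T ∧ (IsDominated D T ∨ IsDominated D Tᶜ) := by
  obtain h | ⟨A, hAmem, hA⟩ := hasSourceAndSink_or_exists_isDominated (by norm_num) hV hD
  · exact .inl h
  have hcompl (B : Finset V) : #Bᶜ = 5 - #B := by rw [card_compl, hV]
  have hAcard : #A = 2 ∨ #A = 3 := by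
    rw [mem_Icc] at hAmem
    lia
  have hAne : A.Nonempty := card_pos.1 (by lia)
  have hAuniv : A ≠ univ := by
    rintro rfl
    rw [card_univ] at hAcard
    lia
  obtain hA2 | hA3 := hAcard
  · obtain ⟨v, hv⟩ := hA.exists_sink hAne hA2.le
    by_cases hstrong : StrongOn D Aᶜ
    · exact .inr ⟨Aᶜ, by rw [hcompl, hA2], hstrong, .inr (by rwa [compl_compl])⟩
    obtain ⟨B, hAB, hBuniv, hB⟩ := hA.exists_ssuperset hstrong
    have := card_lt_card hAB
    obtain ⟨u, hu⟩ := hB.exists_source hBuniv (by rw [hcompl]; lia)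
    exact .inl ⟨u, v, hu, hv⟩
  · obtain ⟨u, hu⟩ := hA.exists_source hAuniv (by rw [hcompl, hA3])
    by_cases hstrong : StrongOn D A
    · exact .inr ⟨A, hA3, hstrong, .inl hA⟩
    obtain ⟨B, hBA, hBne, hB⟩ := hA.exists_ssubset hstrong
    have := card_lt_card hBA
    obtain ⟨v, hv⟩ := hB.exists_sink hBne (by lia)
    exact .inl ⟨u, v, hu, hv⟩

end Dominated

section Orient

variable {G : SimpleGraph V}

instance orient_asymm (D : G.Orient) : Std.Asymm D.1 where
  asymm u v h := (D.2.2 u v (D.2.1 u v h)).1 h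

instance tournament_trichotomous (D : (⊤ : SimpleGraph V).Orient) : Std.Trichotomous D.1 where
  trichotomous u v huv hvu := by
    by_contra hne
    exact huv ((D.2.2 u v hne).2 hvu)

theorem FreeOrient.not_strongOn {k : ℕ} {D : (⊤ : SimpleGraph V).Orient}
    (hD : FreeOrient (SFam k) D) (S : Finset V) (hcard : #S = k) : ¬ StrongOn D.1 S := by
  intro hS
  let e : Fin k ≃ S := (S.equivFinOfCardEq hcard).symm
  have hinj : Function.Injective fun i => (e i : V) := Subtype.val_injective.comp e.injective
  let T : (⊤ : SimpleGraph (Fin k)).Orient := ⟨fun i j => D.1 (e i) (e j),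
    fun i j h hij => D.2.1 _ _ h (congrArg (fun i => (e i : V)) hij),
    fun i j h => D.2.2 _ _ (hinj.ne h)⟩
  refine hD k T ⟨rfl, fun i j => ?_⟩ ⟨fun i => e i, hinj, fun _ _ h => h⟩
  have hlift := (hS.reflTransGen (e i) (e j)).lift (p := T.1) e.symm fun a b h => by
    simpa [T, Function.onFun] using h
  simpa [Function.onFun] using hlift

theorem numOrient_eq_card (G : SimpleGraph V) [Fintype G.Orient] (F : TournFamily) :
    numOrient G F = #{D : G.Orient | FreeOrient F D} := by
  rw [numOrient, Nat.card_eq_fintype_card, Fintype.card_subtype]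

theorem orient_rel_iff_rel_of_sym2_eq {D D' : G.Orient} {a b c d : V} (h : s(a, b) = s(c, d))
    (hab : G.Adj a b) (hcd : D.1 c d ↔ D'.1 c d) : D.1 a b ↔ D'.1 a b := by
  obtain ⟨rfl, rfl⟩ | ⟨rfl, rfl⟩ := Sym2.eq_iff.1 h
  · exact hcd
  · rw [D.2.2 a b hab, D'.2.2 a b hab, hcd]

theorem card_orient_forall_mem_le [Fintype V] (G : SimpleGraph V) [Fintype G.Orient]
    [Fintype G.edgeSet] (P : Finset (V × V)) (hP : ∀ p ∈ P, G.Adj p.1 p.2 ∧ p.swap ∉ P) :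
    #{D : G.Orient | ∀ p ∈ P, D.1 p.1 p.2} ≤ 2 ^ (#G.edgeFinset - #P) := by
  let E : Finset (Sym2 V) := P.image fun p => s(p.1, p.2)
  have hE : #E = #P := card_image_of_injOn fun p hp q hq h => by
    obtain h | h := Sym2.mk_eq_mk_iff.1 h
    · exact h
    · exact absurd (h ▸ hp) (hP q hq).2
  have hEG : E ⊆ G.edgeFinset := image_subset_iff.2 fun p hp => by
    simpa using (hP p hp).1
  rw [← hE, ← card_sdiff_of_subset hEG, ← card_powerset]
  refine card_le_card_of_injOn (fun D => {e ∈ G.edgeFinset \ E | D.1 e.out.1 e.out.2})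
    (fun D _ => mem_powerset.2 (filter_subset _ _)) fun D hD D' hD' h => ?_
  rw [mem_coe, mem_filter_univ] at hD hD'
  ext a b
  by_cases hab : G.Adj a b
  · by_cases hE : s(a, b) ∈ E
    · obtain ⟨p, hp, hpab⟩ := mem_image.1 hE
      exact orient_rel_iff_rel_of_sym2_eq hpab.symm hab (iff_of_true (hD p hp) (hD' p hp))
    · have hout : s(s(a, b).out.1, s(a, b).out.2) = s(a, b) := Quot.out_eq _
      refine orient_rel_iff_rel_of_sym2_eq hout.symm hab ?_
      simpa [hab, hE] using Finset.ext_iff.1 h s(a, b)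
  · exact iff_of_false (fun h => hab (D.2.1 a b h)) fun h => hab (D'.2.1 a b h)

end Orient

section Count

theorem card_filter_le_add {α : Type*} [Fintype α] {p q r : α → Prop} [DecidablePred p]
    [DecidablePred q] [DecidablePred r] (h : ∀ x, p x → q x ∨ r x) :
    #{x | p x} ≤ #{x | q x} + #{x | r x} :=
  (card_le_card fun x hx => by simpa using h x ((mem_filter_univ x).1 hx)).trans
    (card_union_le _ _)

theorem card_filter_le_sum {α ι : Type*} [Fintype α] {p : α → Prop} {q : ι → α → Prop}
    [DecidablePred p] [∀ i, DecidablePred (q i)] {I : Finset ι} (h : ∀ x, p x → ∃ i ∈ I, q i x) :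
    #{x | p x} ≤ ∑ i ∈ I, #{x | q i x} :=
  (card_le_card fun x hx => by simpa using h x ((mem_filter_univ x).1 hx)).trans card_biUnion_le

variable [Fintype V] {A T : Finset V}

/-- The pairs `(b, a)` with `b ∉ A` and `a ∈ A`: those that must be edges of `D` for `A` to be
dominated in `D`. -/
def cutPairs (A : Finset V) : Finset (V × V) := Aᶜ ×ˢ A

theorem mem_cutPairs {p : V × V} : p ∈ cutPairs A ↔ p.1 ∉ A ∧ p.2 ∈ A := by
  simp [cutPairs]

theorem card_cutPairs (A : Finset V) : #(cutPairs A) = (Fintype.card V - #A) * #A := by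
  rw [cutPairs, card_product, card_compl]

theorem isDominated_iff_forall_mem_cutPairs {D : V → V → Prop} :
    IsDominated D A ↔ ∀ p ∈ cutPairs A, D p.1 p.2 :=
  ⟨fun h _ hp => h (mem_cutPairs.1 hp).1 (mem_cutPairs.1 hp).2,
    fun h b hb a ha => h (b, a) (mem_cutPairs.2 ⟨hb, ha⟩)⟩

theorem card_tournament_forall_mem_le (P : Finset (V × V))
    (hP : ∀ p ∈ P, p.1 ≠ p.2 ∧ p.swap ∉ P) :
    #{D : (⊤ : SimpleGraph V).Orient | ∀ p ∈ P, D.1 p.1 p.2} ≤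
      2 ^ ((Fintype.card V).choose 2 - #P) := by
  rw [← SimpleGraph.card_edgeFinset_top_eq_card_choose_two]
  exact card_orient_forall_mem_le ⊤ P hP

theorem card_isDominated_le (A : Finset V) :
    #{D : (⊤ : SimpleGraph V).Orient | IsDominated D.1 A} ≤
      2 ^ ((Fintype.card V).choose 2 - (Fintype.card V - #A) * #A) := by
  simp only [isDominated_iff_forall_mem_cutPairs, ← card_cutPairs]
  refine card_tournament_forall_mem_le _ fun p hp => ?_
  rw [mem_cutPairs] at hp ⊢
  exact ⟨fun h => hp.1 (h ▸ hp.2), fun h => hp.1 h.2⟩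

theorem card_exists_isDominated_le (m : ℕ) :
    #{D : (⊤ : SimpleGraph V).Orient | ∃ A, #A = m ∧ IsDominated D.1 A} ≤
      (Fintype.card V).choose m *
        2 ^ ((Fintype.card V).choose 2 - (Fintype.card V - m) * m) := by
  have hcover (D : (⊤ : SimpleGraph V).Orient) : (∃ A, #A = m ∧ IsDominated D.1 A) →
      ∃ A ∈ powersetCard m univ, IsDominated D.1 A := by
    simp [mem_powersetCard]
  rw [← card_univ, ← card_powersetCard, ← smul_eq_mul, ← sum_const]
  refine (card_filter_le_sum hcover).trans (sum_le_sum fun A hA => ?_)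
  rw [← (mem_powersetCard.1 hA).2]
  exact card_isDominated_le A

theorem card_source_sink_le {u v : V} (huv : u ≠ v) :
    #{D : (⊤ : SimpleGraph V).Orient | IsDominated D.1 {u}ᶜ ∧ IsDominated D.1 {v}} ≤
      2 ^ ((Fintype.card V).choose 2 - (2 * Fintype.card V - 3)) := by
  have hcard : #(cutPairs {u}ᶜ ∪ cutPairs {v}) = 2 * Fintype.card V - 3 := by
    have hinter : cutPairs {u}ᶜ ∩ cutPairs {v} = {(u, v)} := by
      ext ⟨a, b⟩
      simp only [mem_inter, mem_cutPairs, mem_compl, mem_singleton, Prod.mk.injEq]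
      grind
    have hV := Fintype.one_lt_card_iff.2 ⟨u, v, huv⟩
    have hunion := card_union_add_card_inter (cutPairs {u}ᶜ) (cutPairs {v})
    rw [hinter, card_cutPairs, card_cutPairs, card_compl, card_singleton u, card_singleton v,
      card_singleton (u, v), Nat.sub_sub_self hV.le] at hunion
    lia
  simp only [isDominated_iff_forall_mem_cutPairs, ← forall_mem_union, ← hcard]
  refine card_tournament_forall_mem_le _ fun p hp => ?_
  simp only [mem_union, mem_cutPairs, mem_compl, mem_singleton, Prod.fst_swap, Prod.snd_swap]
    at hp ⊢
  grind

theorem card_hasSourceAndSink_le [Nontrivial V] :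
    #{D : (⊤ : SimpleGraph V).Orient | HasSourceAndSink D.1} ≤
      Fintype.card V * (Fintype.card V - 1) *
        2 ^ ((Fintype.card V).choose 2 - (2 * Fintype.card V - 3)) := by
  have hcover (D : (⊤ : SimpleGraph V).Orient) : HasSourceAndSink D.1 →
      ∃ q ∈ univ.offDiag, IsDominated D.1 {q.1}ᶜ ∧ IsDominated D.1 {q.2} := by
    rintro ⟨u, v, hu, hv⟩
    exact ⟨(u, v), by simpa using hu.ne_of_source_of_sink hv, hu, hv⟩
  rw [Nat.mul_sub_one, ← card_univ, ← offDiag_card, card_univ, ← smul_eq_mul, ← sum_const]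
  exact (card_filter_le_sum hcover).trans <| sum_le_sum fun q hq =>
    card_source_sink_le (mem_offDiag.1 hq).2.2

theorem card_cycle_isDominated_le {a b c : V} (hab : a ≠ b) (hac : a ≠ c) (hbc : b ≠ c)
    (habA : a ∈ A ↔ b ∈ A) (hacA : a ∈ A ↔ c ∈ A) :
    #{D : (⊤ : SimpleGraph V).Orient |
        (D.1 a b ∧ D.1 b c ∧ D.1 c a) ∧ IsDominated D.1 A} ≤
      2 ^ ((Fintype.card V).choose 2 - ((Fintype.card V - #A) * #A + 3)) := by
  let C : Finset (V × V) := {(a, b), (b, c), (c, a)}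
  have hC : #C = 3 := card_eq_three.2
    ⟨_, _, _, by simp [hab], by simp [hac], by simp [hac.symm, hbc], rfl⟩
  have hdisj : Disjoint (cutPairs A) C := by
    simp only [disjoint_left, Prod.forall, mem_cutPairs, C, mem_insert, mem_singleton,
      Prod.mk.injEq]
    grind
  rw [← card_cutPairs, ← hC, ← card_union_of_disjoint hdisj]
  convert card_tournament_forall_mem_le (cutPairs A ∪ C) fun p hp => ?_ using 4 with D
  · rw [isDominated_iff_forall_mem_cutPairs, and_comm, forall_mem_union]
    simp [C]
  · simp only [mem_union, mem_cutPairs, C, mem_insert, mem_singleton, Prod.ext_iff, Prod.fst_swap,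
      Prod.snd_swap] at hp ⊢
    grind

theorem card_strongOn_isDominated_le (hT : #T = 3) (hA : T ⊆ A ∨ Disjoint T A) :
    #{D : (⊤ : SimpleGraph V).Orient | StrongOn D.1 T ∧ IsDominated D.1 A} ≤
      2 * 2 ^ ((Fintype.card V).choose 2 - ((Fintype.card V - #A) * #A + 3)) := by
  obtain ⟨a, b, c, hab, hac, hbc, rfl⟩ := card_eq_three.1 hT
  have hmem : (a ∈ A ↔ b ∈ A) ∧ (a ∈ A ↔ c ∈ A) := by
    simp only [insert_subset_iff, singleton_subset_iff, disjoint_insert_left,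
      disjoint_singleton_left] at hA
    tauto
  rw [two_mul]
  refine (card_filter_le_add fun D ⟨hstrong, hdom⟩ => ?_).trans <| Nat.add_le_add
    (card_cycle_isDominated_le hab hac hbc hmem.1 hmem.2)
    (card_cycle_isDominated_le hab.symm hbc hac hmem.1.symm (hmem.1.symm.trans hmem.2))
  obtain h | ⟨hba, hcb, hac⟩ := hstrong.cycle_or_cycle hab hac hbc
  · exact .inl ⟨h, hdom⟩
  · exact .inr ⟨⟨hba, hac, hcb⟩, hdom⟩

theorem card_exists_strongOn_isDominated_le :
    #{D : (⊤ : SimpleGraph V).Orient |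
        ∃ T, #T = 3 ∧ StrongOn D.1 T ∧ (IsDominated D.1 T ∨ IsDominated D.1 Tᶜ)} ≤
      (Fintype.card V).choose 3 *
        (4 * 2 ^ ((Fintype.card V).choose 2 - ((Fintype.card V - 3) * 3 + 3))) := by
  have hcover (D : (⊤ : SimpleGraph V).Orient) :
      (∃ T, #T = 3 ∧ StrongOn D.1 T ∧ (IsDominated D.1 T ∨ IsDominated D.1 Tᶜ)) →
      ∃ T ∈ powersetCard 3 univ, StrongOn D.1 T ∧ (IsDominated D.1 T ∨ IsDominated D.1 Tᶜ) := by
    simp [mem_powersetCard]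
  rw [← card_univ, ← card_powersetCard, card_univ, ← smul_eq_mul, ← sum_const]
  refine (card_filter_le_sum hcover).trans (sum_le_sum fun T hT => ?_)
  have hT := (mem_powersetCard.1 hT).2
  have hle := hT ▸ card_le_univ T
  refine (card_filter_le_add fun D => and_or_left.1).trans ((Nat.add_le_add
    (card_strongOn_isDominated_le hT (.inl subset_rfl))
    (card_strongOn_isDominated_le hT (.inr disjoint_compl_right))).trans_eq ?_)
  rw [card_compl, hT, Nat.sub_sub_self hle, mul_comm 3]
  ring

theorem numOrient_top_sFam_le_sum {k : ℕ} (hk : 3 ≤ k) (hV : Fintype.card V = k + 1) :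
    numOrient (⊤ : SimpleGraph V) (SFam k) ≤
      (k + 1) * k * 2 ^ ((k + 1).choose 2 - (2 * k - 1)) +
        ∑ m ∈ Icc 2 (k - 1), (k + 1).choose m * 2 ^ ((k + 1).choose 2 - (k + 1 - m) * m) := by
  have : Nontrivial V := Fintype.one_lt_card_iff_nontrivial.1 (by lia)
  rw [numOrient_eq_card]
  calc _ ≤ _ := card_filter_le_add fun D hD =>
        hasSourceAndSink_or_exists_isDominated hk hV hD.not_strongOn
    _ ≤ _ := Nat.add_le_add card_hasSourceAndSink_le <|
        (card_filter_le_sum fun D ⟨A, hA, hdom⟩ => ⟨#A, hA, A, rfl, hdom⟩).trans <|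
          sum_le_sum fun m _ => card_exists_isDominated_le m
    _ = _ := by rw [hV]; rfl

theorem numOrient_top_sFam_four_le (hV : Fintype.card V = 5) :
    numOrient (⊤ : SimpleGraph V) (SFam 4) ≤ 240 := by
  have : Nontrivial V := Fintype.one_lt_card_iff_nontrivial.1 (by lia)
  rw [numOrient_eq_card]
  calc _ ≤ _ := card_filter_le_add fun D hD =>
        hasSourceAndSink_or_exists_strongOn_card_three hV hD.not_strongOn
    _ ≤ _ := Nat.add_le_add card_hasSourceAndSink_le card_exists_strongOn_isDominated_le
    _ = 240 := by rw [hV]; decide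

end Count

section Numerics

theorem turanNum_add_two {r : ℕ} (hr : 2 ≤ r) : turanNum r (r + 2) + 2 = (r + 2).choose 2 := by
  have htwo : #(SimpleGraph.turanGraph 2 r).edgeFinset = 1 := by
    convert! SimpleGraph.card_edgeFinset_top_eq_card_choose_two (V := Fin 2)
    exact SimpleGraph.turanGraph_eq_top.2 (.inr hr)
  have hturan : turanNum r (r + 2) = 1 + 2 * (r - 1) + r.choose 2 := by
    rw [turanNum, add_comm r, SimpleGraph.card_edgeFinset_turanGraph_add, htwo]
  have hchoose : (r + 2).choose 2 = (r + 1) + (r + r.choose 2) := by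
    rw [Nat.choose_succ_succ', Nat.choose_succ_succ' r 1, Nat.choose_one_right,
      Nat.choose_one_right]
  lia

theorem sum_choose_mul_two_pow_le {k : ℕ} (b : ℕ) :
    ∑ m ∈ Icc 2 (k - 1), (k + 1).choose m * 2 ^ (b - (k + 1 - m) * m) ≤
      2 ^ (k + 1) * 2 ^ (b - 2 * (k - 1)) := by
  have hcut {m : ℕ} (hm : m ∈ Icc 2 (k - 1)) : 2 * (k - 1) ≤ (k + 1 - m) * m := by
    obtain ⟨h2, hk⟩ := mem_Icc.1 hm
    obtain ⟨i, rfl⟩ := Nat.exists_eq_add_of_le h2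
    obtain ⟨j, hj⟩ := Nat.exists_eq_add_of_le hk
    rw [show k + 1 - (2 + i) = j + 2 by lia]
    nlinarith [Nat.zero_le (i * j)]
  rw [← Nat.sum_range_choose, sum_mul]
  calc _ ≤ ∑ m ∈ Icc 2 (k - 1), (k + 1).choose m * 2 ^ (b - 2 * (k - 1)) :=
        sum_le_sum fun m hm => Nat.mul_le_mul_left _ <|
          Nat.pow_le_pow_right two_pos (Nat.sub_le_sub_left (hcut hm) b)
    _ ≤ _ := sum_le_sum_of_subset fun m hm => by
        rw [mem_Icc] at hm
        rw [mem_range]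
        lia

theorem succ_mul_self_le_two_pow {k : ℕ} (hk : 6 ≤ k) : (k + 1) * k ≤ 2 ^ k := by
  induction k, hk using Nat.le_induction with
  | base => norm_num
  | succ k hk ih =>
    rw [pow_succ]
    nlinarith

theorem source_sink_add_sum_choose_lt {k : ℕ} (hk : 6 ≤ k) :
    (k + 1) * k * 2 ^ ((k + 1).choose 2 - (2 * k - 1)) +
        ∑ m ∈ Icc 2 (k - 1), (k + 1).choose m * 2 ^ ((k + 1).choose 2 - (k + 1 - m) * m) <
      2 ^ ((k + 1).choose 2 - 2) := by
  have hchoose : 2 * k + 2 ≤ (k + 1).choose 2 := by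
    rw [Nat.choose_two_right, Nat.add_sub_cancel, Nat.le_div_iff_mul_le two_pos]
    nlinarith
  generalize (k + 1).choose 2 = b at hchoose ⊢
  have hfirst : (k + 1) * k * 2 ^ (b - (2 * k - 1)) < 2 ^ (b - 3) :=
    calc _ ≤ 2 ^ k * 2 ^ (b - (2 * k - 1)) :=
          Nat.mul_le_mul_right _ (succ_mul_self_le_two_pow hk)
      _ < 2 ^ (b - 3) := by
          rw [← pow_add]
          exact Nat.pow_lt_pow_right one_lt_two (by lia)
  have hsecond : 2 ^ (k + 1) * 2 ^ (b - 2 * (k - 1)) ≤ 2 ^ (b - 3) := by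
    rw [← pow_add]
    exact Nat.pow_le_pow_right two_pos (by lia)
  calc _ < 2 ^ (b - 3) + 2 ^ (b - 3) :=
        Nat.add_lt_add_of_lt_of_le hfirst ((sum_choose_mul_two_pow_le b).trans hsecond)
    _ = 2 ^ (b - 2) := by
        rw [← two_mul, ← pow_succ']
        congr 1
        lia

end Numerics

/-- For `k ≥ 4`, the number of `𝓢_k`-free orientations of `K_{k+1}` is less than
`2 ^ t_{k-1}(k+1)`. -/
theorem numOrient_complete_k_succ_lt (k : ℕ) (hk : 4 ≤ k) :
    numOrient (⊤ : SimpleGraph (Fin (k + 1))) (SFam k) < 2 ^ turanNum (k - 1) (k + 1) := by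
  have hturan : turanNum (k - 1) (k + 1) = (k + 1).choose 2 - 2 := by
    obtain ⟨r, rfl⟩ := Nat.exists_eq_add_of_le' (show 1 ≤ k by lia)
    exact Nat.eq_sub_of_add_eq (turanNum_add_two (by lia))
  have hsum := numOrient_top_sFam_le_sum (V := Fin (k + 1)) (by lia) (Fintype.card_fin _)
  rw [hturan]
  obtain rfl | rfl | hk : k = 4 ∨ k = 5 ∨ 6 ≤ k := by lia
  · exact (numOrient_top_sFam_four_le (Fintype.card_fin 5)).trans_lt (by decide)
  · exact hsum.trans_lt (by decide)
  · exact hsum.trans_lt (source_sink_add_sum_choose_lt hk)
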